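/- Let K₁, K₂ > 0 be couplings below criticality, and set A = exp(2K₁ + 2K₂⋆), B = exp(2K₁ − 2K₂⋆) = exp(γ̂(0)). Then for every v with 0 < v < γ̂(0): (i) (A − e^v)·(B − e^v)·(A·e^v − 1)·(B·e^v − 1) > 0; (ii) consequently 𝒥(v) = (1/4)·(A − B)²·(e^{2v} − 1)² / [(A − e^v)(B − e^v)(A·e^v − 1)(B·e^v − 1)] > 0; and (iii) the quantity 𝒯(v) = √((√(1 + 𝒥(v)) − 1)/(√(1 + 𝒥(v)) + 1)) satisfies 0 < 𝒯(v) < 1, so the point tension of the fluctuating contact points, τ_fcp = −ln 𝒯(v), is real and strictly positive. -/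

import Mathlib

open Real Filter Set

/-- `𝒥(v)` of the paper, with `A = exp(2K₁ + 2K₂⋆)`, `B = exp(2K₁ − 2K₂⋆)`. -/
noncomputable def calJ (A B v : ℝ) : ℝ :=
  1 / 4 * (A - B) ^ 2 * (Real.exp (2 * v) - 1) ^ 2
    / ((A - Real.exp v) * (B - Real.exp v)
        * (A * Real.exp v - 1) * (B * Real.exp v - 1))

/-- `𝒯(v) = √((√(1+𝒥(v)) − 1)/(√(1+𝒥(v)) + 1))`. -/
noncomputable def calT (A B v : ℝ) : ℝ :=
  Real.sqrt ((Real.sqrt (1 + calJ A B v) - 1) / (Real.sqrt (1 + calJ A B v) + 1))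

/-!
Write `A = exp a` and `B = exp b`. Pairing the factors of the denominator of `𝒥` as
`(A - e ^ v) * (A * e ^ v - 1) = 2 * e ^ (a + v) * (cosh a - cosh v)` gives
`𝒥(v) = (sinh ((a - b) / 2) * sinh v) ^ 2 / ((cosh a - cosh v) * (cosh b - cosh v))`, so that
the signs only depend on the position of `|v|` relative to `|a|` and `|b|`. The passage from `𝒥`
to `𝒯` maps `(0, ∞)` into `(0, 1)`.
-/

theorem abs_lt_abs_of_nonneg_of_lt {x y : ℝ} (hx : 0 ≤ x) (hxy : x < y) : |x| < |y| := by
  rwa [abs_of_nonneg hx, abs_of_nonneg (hx.trans hxy.le)]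

theorem tanh_pos_iff {x : ℝ} : 0 < tanh x ↔ 0 < x := by
  rw [tanh_eq_sinh_div_cosh, div_pos_iff_of_pos_right (cosh_pos x), sinh_pos_iff]

theorem cosh_sub_cosh_mul_cosh_sub_cosh_pos_iff {a b v : ℝ} :
    0 < (cosh a - cosh v) * (cosh b - cosh v) ↔ |v| ∉ uIcc |a| |b| := by
  simp only [mul_pos_iff, sub_pos, sub_neg, cosh_lt_cosh, uIcc, mem_Icc, not_and_or, not_le,
    lt_inf_iff, sup_lt_iff]

theorem exp_sub_exp_eq_two_mul_exp_mul_sinh (a b : ℝ) :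
    exp a - exp b = 2 * exp ((a + b) / 2) * sinh ((a - b) / 2) := by
  have ha : exp a = exp ((a + b) / 2) * exp ((a - b) / 2) := by
    rw [← exp_add]
    ring_nf
  have hb : exp b = exp ((a + b) / 2) * exp (-((a - b) / 2)) := by
    rw [← exp_add]
    ring_nf
  rw [ha, hb, sinh_eq]
  ring

theorem exp_two_mul_sub_one (v : ℝ) : exp (2 * v) - 1 = 2 * exp v * sinh v := by
  simpa using exp_sub_exp_eq_two_mul_exp_mul_sinh (2 * v) 0

theorem exp_sub_exp_mul_exp_mul_exp_sub_one (a v : ℝ) :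
    (exp a - exp v) * (exp a * exp v - 1) = 2 * exp (a + v) * (cosh a - cosh v) := by
  rw [cosh_eq, cosh_eq, exp_add, exp_neg, exp_neg]
  field_simp
  ring

theorem calJ_denom_exp_exp (a b v : ℝ) :
    (exp a - exp v) * (exp b - exp v) * (exp a * exp v - 1) * (exp b * exp v - 1) =
      4 * exp (a + b + 2 * v) * ((cosh a - cosh v) * (cosh b - cosh v)) :=
  calc
    _ = ((exp a - exp v) * (exp a * exp v - 1)) * ((exp b - exp v) * (exp b * exp v - 1)) := by
      ring
    _ = 4 * (exp (a + v) * exp (b + v)) * ((cosh a - cosh v) * (cosh b - cosh v)) := by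
      rw [exp_sub_exp_mul_exp_mul_exp_sub_one, exp_sub_exp_mul_exp_mul_exp_sub_one]
      ring
    _ = 4 * exp (a + b + 2 * v) * ((cosh a - cosh v) * (cosh b - cosh v)) := by
      rw [← exp_add]
      ring_nf

-- If `|v| = |a|` or `|v| = |b|`, both sides are the junk value `0` of a division by zero.
theorem calJ_exp_exp (a b v : ℝ) :
    calJ (exp a) (exp b) v =
      (sinh ((a - b) / 2) * sinh v) ^ 2 / ((cosh a - cosh v) * (cosh b - cosh v)) := by
  have hexp : exp (a + b + 2 * v) = (exp ((a + b) / 2) * exp v) ^ 2 := by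
    rw [← exp_add, ← exp_nat_mul]
    ring_nf
  have hne : 4 * exp (a + b + 2 * v) ≠ 0 := by positivity
  rw [calJ, calJ_denom_exp_exp, exp_sub_exp_eq_two_mul_exp_mul_sinh, exp_two_mul_sub_one,
    ← mul_div_mul_left _ ((cosh a - cosh v) * (cosh b - cosh v)) hne, hexp]
  ring

theorem calJ_denom_exp_exp_pos_iff {a b v : ℝ} :
    0 < (exp a - exp v) * (exp b - exp v) * (exp a * exp v - 1) * (exp b * exp v - 1) ↔
      |v| ∉ uIcc |a| |b| := by
  rw [calJ_denom_exp_exp, mul_pos_iff_of_pos_left (by positivity),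
    cosh_sub_cosh_mul_cosh_sub_cosh_pos_iff]

theorem calJ_exp_exp_pos {a b v : ℝ} (hab : a ≠ b) (hv : v ≠ 0) (hvab : |v| ∉ uIcc |a| |b|) :
    0 < calJ (exp a) (exp b) v := by
  have hsinh : sinh ((a - b) / 2) * sinh v ≠ 0 :=
    mul_ne_zero (sinh_ne_zero.2 (div_ne_zero (sub_ne_zero.2 hab) two_ne_zero)) (sinh_ne_zero.2 hv)
  rw [calJ_exp_exp]
  exact div_pos (sq_pos_iff.2 hsinh) (cosh_sub_cosh_mul_cosh_sub_cosh_pos_iff.2 hvab)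

theorem calT_pos_iff {A B v : ℝ} : 0 < calT A B v ↔ 0 < calJ A B v := by
  rw [calT, sqrt_pos, div_pos_iff_of_pos_right (by positivity), sub_pos, lt_sqrt zero_le_one,
    one_pow, lt_add_iff_pos_right]

theorem calT_lt_one (A B v : ℝ) : calT A B v < 1 := by
  rw [calT, sqrt_lt' one_pos, one_pow, div_lt_one (by positivity)]
  linarith

theorem statement_19_general {a b v : ℝ} (hab : a ≠ b) (hv : v ≠ 0)
    (hvab : |v| ∉ uIcc |a| |b|) :
    0 < (exp a - exp v) * (exp b - exp v) * (exp a * exp v - 1) * (exp b * exp v - 1) ∧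
      0 < calJ (exp a) (exp b) v ∧
      0 < calT (exp a) (exp b) v ∧
      calT (exp a) (exp b) v < 1 ∧
      0 < -log (calT (exp a) (exp b) v) := by
  have hJ : 0 < calJ (exp a) (exp b) v := calJ_exp_exp_pos hab hv hvab
  have hT : 0 < calT (exp a) (exp b) v := calT_pos_iff.2 hJ
  have hT_lt : calT (exp a) (exp b) v < 1 := calT_lt_one _ _ v
  exact ⟨calJ_denom_exp_exp_pos_iff.2 hvab, hJ, hT, hT_lt, neg_pos.2 (log_neg hT hT_lt)⟩

theorem statement_19 (K₁ K₂ K₁s K₂s : ℝ) (hK₁ : 0 < K₁) (hK₂ : 0 < K₂)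
    (hdual₁ : Real.tanh K₁s = Real.exp (-(2 * K₁)))
    (hdual₂ : Real.tanh K₂s = Real.exp (-(2 * K₂)))
    (hγ : 0 < 2 * K₂ - 2 * K₁s) (hγhat : 0 < 2 * K₁ - 2 * K₂s) :
    ∀ v : ℝ, 0 < v → v < 2 * K₁ - 2 * K₂s →
      (0 < (Real.exp (2 * K₁ + 2 * K₂s) - Real.exp v)
          * (Real.exp (2 * K₁ - 2 * K₂s) - Real.exp v)
          * (Real.exp (2 * K₁ + 2 * K₂s) * Real.exp v - 1)
          * (Real.exp (2 * K₁ - 2 * K₂s) * Real.exp v - 1)) ∧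
      0 < calJ (Real.exp (2 * K₁ + 2 * K₂s)) (Real.exp (2 * K₁ - 2 * K₂s)) v ∧
      0 < calT (Real.exp (2 * K₁ + 2 * K₂s)) (Real.exp (2 * K₁ - 2 * K₂s)) v ∧
      calT (Real.exp (2 * K₁ + 2 * K₂s)) (Real.exp (2 * K₁ - 2 * K₂s)) v < 1 ∧
      0 < -Real.log
          (calT (Real.exp (2 * K₁ + 2 * K₂s)) (Real.exp (2 * K₁ - 2 * K₂s)) v) := by
  intro v hv hvb
  have hK₂s : 0 < K₂s := tanh_pos_iff.1 (hdual₂ ▸ exp_pos _)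
  exact statement_19_general (by linarith) hv.ne' (notMem_uIcc_of_lt
    (abs_lt_abs_of_nonneg_of_lt hv.le (by linarith)) (abs_lt_abs_of_nonneg_of_lt hv.le hvb))
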